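/- Let H=(V_H,E_H) be a fixed graph with at least two edges, let P be a strict partial order on E_H with height(P) the maximum size of a chain in P, let ψ be a label multiplicity distribution, and set ρ_H = min over subgraphs I=(V_I,E_I) of H with at least two edges of |V_I|/(|E_I|−1). Let β,T:ℕ→ℕ with T(n)≥β(n) for all n, and suppose there exists n₀ such that β(n)≥height(P) for all n≥n₀. If β(n)/T(n)·n^{ρ_H} → ∞ as n→∞, then the probability that a random temporal graph drawn from Γ_{[n]}(ψ,T(n)) contains (H,P) as a β(n)-temporal motif tends to 1 as n→∞. -/

import Mathlib

open MeasureTheory ProbabilityTheory Filter Set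
open scoped ENNReal NNReal Topology

noncomputable section

namespace RTG

/-- A temporal graph on vertex type `V`, given by the finite set of real time labels
attached to each potential edge (unordered pair of vertices). -/
abbrev TGraph (V : Type*) := Sym2 V → Finset ℝ

/-- `P` is a strict partial order supported on the set `s`. -/
def StrictPartialOrderOn {α : Type*} (s : Set α) (P : α → α → Prop) : Prop :=
  (∀ a, ¬ P a a) ∧ (∀ a b c, P a b → P b c → P a c) ∧ ∀ a b, P a b → a ∈ s ∧ b ∈ s

/-- The temporal graph `Λ` contains `(H, P)` as a `δ`-temporal motif. -/
def Contains {VH V : Type*} (H : SimpleGraph VH) (P : Sym2 VH → Sym2 VH → Prop)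
    (Λ : TGraph V) (δ : ℝ) : Prop :=
  ∃ Φ : VH → V, Function.Injective Φ ∧
    ∃ lab : Sym2 VH → ℝ,
      (∀ e ∈ H.edgeSet, lab e ∈ Λ (Sym2.map Φ e)) ∧
      (∀ e f, P e f → lab e < lab f) ∧
      (∀ e ∈ H.edgeSet, ∀ f ∈ H.edgeSet, lab e - lab f < δ)

/-- The sparsity `ρ_H` of a graph `H`: the minimum over subgraphs with at least two
edges of `|V_I| / (|E_I| - 1)`. -/
def sparsity {VH : Type*} (H : SimpleGraph VH) : ℝ :=
  sInf {x : ℝ | ∃ I : H.Subgraph, 2 ≤ I.edgeSet.ncard ∧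
    x = (I.verts.ncard : ℝ) / ((I.edgeSet.ncard : ℝ) - 1)}

/-- The space of label data on a single edge: a number `k` of labels together with the
tuple of `k` label values (indexed in order of sampling). -/
abbrev LabelSpace := Σ k : ℕ, Fin k → ℝ

/-- The uniform distribution on `(0, 1]`. -/
def unif01 : Measure ℝ := volume.restrict (Set.Ioc 0 1)

/-- The uniform distribution on `{1, …, T}` (as a measure on `ℝ`). -/
def unifDisc (T : ℕ) : Measure ℝ :=
  (T : ℝ≥0∞)⁻¹ • ∑ k ∈ Finset.Icc 1 T, Measure.dirac (k : ℝ)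

/-- The distribution of the label data of a single edge: the number of labels is drawn
according to `ψ` and, independently, each label value is drawn according to `ν`. -/
def edgeMeasure (ν : Measure ℝ) (ψ : Measure ℕ) : Measure LabelSpace :=
  Measure.sum fun k => ψ {k} • (Measure.pi fun _ : Fin k => ν).map (Sigma.mk k)

/-- The doubly random temporal graph model on vertex set `V` with label value
distribution `ν` and label multiplicity distribution `ψ`: all edges receive independent
identically distributed label data. -/
def model (V : Type*) [Fintype V] [DecidableEq V] (ν : Measure ℝ) (ψ : Measure ℕ) :
    Measure (Sym2 V → LabelSpace) :=
  Measure.pi fun _ : Sym2 V => edgeMeasure ν ψ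

/-- The continuous doubly random temporal graph `Γ_V(ψ)`. -/
abbrev contModel (V : Type*) [Fintype V] [DecidableEq V] (ψ : Measure ℕ) :
    Measure (Sym2 V → LabelSpace) := model V unif01 ψ

/-- The discrete doubly random temporal graph `Γ_V(ψ, T)`. -/
abbrev discModel (V : Type*) [Fintype V] [DecidableEq V] (ψ : Measure ℕ) (T : ℕ) :
    Measure (Sym2 V → LabelSpace) := model V (unifDisc T) ψ

/-- The temporal graph determined by a sample `ω` of the model: each non-loop edge
carries the sampled set of labels. -/
def toTGraph {V : Type*} [DecidableEq V] (ω : Sym2 V → LabelSpace) : TGraph V :=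
  fun e => if e.IsDiag then ∅ else Finset.image (ω e).2 Finset.univ

/-- The `T`-discretization of a temporal graph: each label `l` is replaced by `⌈T·l⌉`. -/
def discretize {V : Type*} (T : ℕ) (Λ : TGraph V) : TGraph V :=
  fun e => (Λ e).image fun l => ((⌈(T : ℝ) * l⌉ : ℤ) : ℝ)

/-- `ψ` is a label multiplicity distribution: a probability distribution on `ℕ` with
positive finite mean and finite second moment. -/
def IsLMD (ψ : Measure ℕ) : Prop :=
  IsProbabilityMeasure ψ ∧ Integrable (fun k : ℕ => (k : ℝ)) ψ ∧
    Integrable (fun k : ℕ => (k : ℝ) ^ 2) ψ ∧ 0 < ∫ k, (k : ℝ) ∂ψ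

/-- The mean `r` of a label multiplicity distribution. -/
def lmdMean (ψ : Measure ℕ) : ℝ := ∫ k, (k : ℝ) ∂ψ

/-- The second moment `r₂` of a label multiplicity distribution. -/
def lmdSq (ψ : Measure ℕ) : ℝ := ∫ k, (k : ℝ) ^ 2 ∂ψ

/-- `q = P[Q > 0]` for a label multiplicity distribution. -/
def lmdPos (ψ : Measure ℕ) : ℝ := (ψ {k | 0 < k}).toReal

/-- `v` is reachable from the set `S` by time `t` in the temporal graph `Λ`. -/
def ReachBy {V : Type*} (Λ : TGraph V) (S : Set V) (t : ℝ) (v : V) : Prop :=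
  v ∈ S ∨ ∃ (k : ℕ) (f : ℕ → V) (ts : ℕ → ℝ), 0 < k ∧ f 0 ∈ S ∧ f k = v ∧
    (∀ i < k, ts i ∈ Λ s(f i, f (i + 1))) ∧
    (∀ i j, i < j → j < k → ts i < ts j) ∧ ts (k - 1) ≤ t

/-- The reachability ball `B_Λ(S, t)`. -/
def ball {V : Type*} (Λ : TGraph V) (S : Set V) (t : ℝ) : Set V := {v | ReachBy Λ S t v}

/-- The doubling time of the set `S` in `Λ` (with value `∞` if the reachability ball
never doubles in size). -/
def doubleTime {V : Type*} (Λ : TGraph V) (S : Set V) : ℝ≥0∞ :=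
  ⨅ (t : ℝ) (_ : 0 ≤ t ∧ 2 * S.ncard ≤ (ball Λ S t).ncard), ENNReal.ofReal t

/-- The doubling time of the temporal graph `Λ`: the maximum doubling time over all
nonempty vertex sets of size at most half the number of vertices. -/
def doubleAll {V : Type*} [Fintype V] (Λ : TGraph V) : ℝ≥0∞ :=
  ⨆ (S : Set V) (_ : S.Nonempty ∧ 2 * S.ncard ≤ Fintype.card V), doubleTime Λ S

/-- `Double⁻`: the maximum doubling time over nonempty sets of size at most `n/4`. -/
def doubleSmall {V : Type*} [Fintype V] (Λ : TGraph V) : ℝ≥0∞ :=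
  ⨆ (S : Set V) (_ : S.Nonempty ∧ 4 * S.ncard ≤ Fintype.card V), doubleTime Λ S

/-- `Double⁺`: the maximum doubling time over sets of size in `(n/4, n/2]`. -/
def doubleLarge {V : Type*} [Fintype V] (Λ : TGraph V) : ℝ≥0∞ :=
  ⨆ (S : Set V) (_ : Fintype.card V < 4 * S.ncard ∧ 2 * S.ncard ≤ Fintype.card V),
    doubleTime Λ S

/-- The partial reversal `ℛ(Λ, t)`: every label `l < t` is replaced by `t - l`. -/
def reverse {V : Type*} (Λ : TGraph V) (t : ℝ) : TGraph V :=
  fun e => (Λ e).image fun l => if l < t then t - l else l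

/-- The rank of a time `x` among all the labels of the sample `ω`: the number of labels
(on genuine, non-loop, edges) that are at most `x`. -/
def rank {V : Type*} [Fintype V] [DecidableEq V] (ω : Sym2 V → LabelSpace) (x : ℝ) : ℕ :=
  ∑ e ∈ Finset.univ.filter (fun e : Sym2 V => ¬ e.IsDiag),
    Nat.card {i : Fin (ω e).1 // (ω e).2 i ≤ x}

/-- The order discretization `𝒢^O` of the sample `ω`: each label is replaced by its rank
among all labels. -/
def orderDisc {V : Type*} [Fintype V] [DecidableEq V] (ω : Sym2 V → LabelSpace) :
    TGraph V :=
  fun e => if e.IsDiag then ∅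
    else Finset.image (fun i => (rank ω ((ω e).2 i) : ℝ)) Finset.univ

/-!
Second moment method. Cut `{1, …, T}` into about `T / β` disjoint windows, and each window into
`h = height(P)` consecutive slots of about `β / h` labels; cut the vertices into `|V_H|` parts of
equal size. A placement is a window together with one vertex from each part. It is realised if, for
every edge `e` of `H`, the first label of the image of `e` lies in the slot of the window whose
number is the level of `e` in `P`, and a realised placement is a `β`-temporal motif. Restricting
attention to first labels makes each constraint an event of probability `q · (β / h) / T`, and makes
contradictory constraints on one edge disjoint.

Two placements are positively correlated only if they use the same window and share the images of
some edges of `H`. The pairs whose embeddings agree exactly on `S`, where `S` spans `f ≥ 1` edges of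
`H`, contribute a relative variance at most of order `(n ^ |S| · (β / T) ^ (f - 1))⁻¹`, which tends
to `0` because `ρ_H · (f - 1) ≤ |S|` and `(β / T) · n ^ ρ_H → ∞`.
-/

section SecondMoment

variable {Ω ι : Type*} [MeasurableSpace Ω] {s : Finset ι} {A : ι → Set Ω}

/- Cauchy–Schwarz for the number `X` of events that occur, which vanishes off the union `U`:
`(∫ X)² = (∫ 1_U X)² ≤ μ U * ∫ X²`. -/
lemma sq_sum_measure_le_measure_biUnion_mul (μ : Measure Ω) (hA : ∀ i ∈ s, MeasurableSet (A i)) :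
    (∑ i ∈ s, μ (A i)) ^ 2 ≤ μ (⋃ i ∈ s, A i) * ∑ i ∈ s, ∑ j ∈ s, μ (A i ∩ A j) := by
  set U := ⋃ i ∈ s, A i
  set I : Set Ω → Ω → ℝ≥0∞ := fun B => B.indicator 1
  set X : Ω → ℝ≥0∞ := fun ω => ∑ i ∈ s, I (A i) ω
  have hU : MeasurableSet U := Finset.measurableSet_biUnion s hA
  have hI {B : Set Ω} (hB : MeasurableSet B) : Measurable (I B) := measurable_one.indicator hB
  have hI_mul (B C : Set Ω) (ω : Ω) : I B ω * I C ω = I (B ∩ C) ω := by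
    simp only [I, inter_indicator_one, Pi.mul_apply]
  have hAU : ∀ i ∈ s, A i ⊆ U := fun i hi _ hω => mem_biUnion hi hω
  have first_moment : ∫⁻ ω, (I U * X) ω ∂μ = ∑ i ∈ s, μ (A i) := by
    simp only [X, Pi.mul_apply, Finset.mul_sum, hI_mul]
    rw [lintegral_finsetSum s fun i hi => hI (hU.inter (hA i hi))]
    refine Finset.sum_congr rfl fun i hi => ?_
    rw [inter_eq_right.2 (hAU i hi), lintegral_indicator_one (hA i hi)]
  have second_moment : ∫⁻ ω, X ω ^ 2 ∂μ = ∑ i ∈ s, ∑ j ∈ s, μ (A i ∩ A j) := by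
    have hAA : ∀ i ∈ s, ∀ j ∈ s, MeasurableSet (A i ∩ A j) := fun i hi j hj =>
      (hA i hi).inter (hA j hj)
    simp only [X, sq, Finset.sum_mul_sum, hI_mul]
    rw [lintegral_finsetSum s fun i hi =>
      Finset.measurable_fun_sum s fun j hj => hI (hAA i hi j hj)]
    refine Finset.sum_congr rfl fun i hi => ?_
    rw [lintegral_finsetSum s fun j hj => hI (hAA i hi j hj)]
    exact Finset.sum_congr rfl fun j hj => lintegral_indicator_one (hAA i hi j hj)
  have cauchy_schwarz := ENNReal.lintegral_mul_le_Lp_mul_Lq μ Real.HolderConjugate.two_two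
    (hI hU).aemeasurable (Finset.measurable_fun_sum s fun i hi => hI (hA i hi)).aemeasurable
  have hI_sq : ∫⁻ ω, I U ω ^ 2 ∂μ = μ U := by
    simp only [sq, hI_mul, inter_self, I, lintegral_indicator_one hU]
  rw [← ENNReal.mul_rpow_of_nonneg _ _ (by norm_num)] at cauchy_schwarz
  simp only [ENNReal.rpow_two] at cauchy_schwarz
  rw [first_moment, second_moment, hI_sq, one_div,
    ENNReal.le_rpow_inv_iff two_pos, ENNReal.rpow_two] at cauchy_schwarz
  exact cauchy_schwarz

lemma sq_sum_measureReal_le_measureReal_biUnion_mul (μ : Measure Ω) [IsFiniteMeasure μ]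
    (hA : ∀ i ∈ s, MeasurableSet (A i)) :
    (∑ i ∈ s, μ.real (A i)) ^ 2 ≤
      μ.real (⋃ i ∈ s, A i) * ∑ i ∈ s, ∑ j ∈ s, μ.real (A i ∩ A j) := by
  have hfin : μ (⋃ i ∈ s, A i) * ∑ i ∈ s, ∑ j ∈ s, μ (A i ∩ A j) ≠ ∞ :=
    ENNReal.mul_ne_top (measure_ne_top _ _) <| ENNReal.sum_ne_top.2 fun _ _ =>
      ENNReal.sum_ne_top.2 fun _ _ => measure_ne_top _ _
  have h := ENNReal.toReal_mono hfin (sq_sum_measure_le_measure_biUnion_mul μ hA)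
  simpa [ENNReal.toReal_sum, ENNReal.sum_ne_top, Measure.real] using h

end SecondMoment

section ConstraintEvent

variable {α Λ X : Type*}

/-- The event that the coordinate `d.1` lies in `S d.2` for every constraint `d ∈ D`. A constraint
is a pair of a coordinate and an index of the family `S`, so that `D` is finite data for which
intersections of events become unions of constraint sets. -/
def constraintEvent (S : Λ → Set X) (D : Finset (α × Λ)) : Set (α → X) :=
  {ω | ∀ d ∈ D, ω d.1 ∈ S d.2}

lemma constraintEvent_eq_biInter (S : Λ → Set X) (D : Finset (α × Λ)) :
    constraintEvent S D = ⋂ d ∈ D, (fun ω => ω d.1) ⁻¹' S d.2 := by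
  ext ω
  simp [constraintEvent]

lemma constraintEvent_inter [DecidableEq α] [DecidableEq Λ] (S : Λ → Set X)
    (D D' : Finset (α × Λ)) :
    constraintEvent S D ∩ constraintEvent S D' = constraintEvent S (D ∪ D') := by
  simp only [constraintEvent_eq_biInter, Finset.mem_union, iInter_or, iInter_inter_distrib]

lemma constraintEvent_eq_empty {S : Λ → Set X} (hdisj : Pairwise (Function.onFun Disjoint S))
    {D : Finset (α × Λ)} (hD : ¬ InjOn Prod.fst (D : Set (α × Λ))) : constraintEvent S D = ∅ := by
  simp only [InjOn, not_forall] at hD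
  obtain ⟨⟨a, i⟩, hi, ⟨_, j⟩, hj, rfl, hij⟩ := hD
  refine eq_empty_of_forall_notMem fun ω hω => ?_
  exact (hdisj fun h => hij (Prod.ext rfl h)).notMem_of_mem_left (hω _ hi) (hω _ hj)

variable [MeasurableSpace X] {S : Λ → Set X}

lemma measurableSet_constraintEvent (hS : ∀ i, MeasurableSet (S i)) (D : Finset (α × Λ)) :
    MeasurableSet (constraintEvent S D) := by
  rw [constraintEvent_eq_biInter]
  exact Finset.measurableSet_biInter D fun d _ => measurable_pi_apply d.1 (hS d.2)

variable [Fintype α] (μ : α → Measure X) [∀ a, IsProbabilityMeasure (μ a)]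

lemma pi_constraintEvent (hS : ∀ i, MeasurableSet (S i)) {D : Finset (α × Λ)}
    (hD : InjOn Prod.fst (D : Set (α × Λ))) :
    Measure.pi μ (constraintEvent S D) = ∏ d ∈ D, μ d.1 (S d.2) := by
  have indep := (iIndepFun_pi (μ := μ) (X := fun _ => id) fun _ => aemeasurable_id).precomp
    (injOn_iff_injective.1 hD)
  calc Measure.pi μ (constraintEvent S D)
      = Measure.pi μ (⋂ d : (D : Set (α × Λ)), (fun ω => ω d.1.1) ⁻¹' S d.1.2) := by
        rw [constraintEvent_eq_biInter, iInter_subtype]; rfl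
    _ = ∏ d : (D : Set (α × Λ)), Measure.pi μ ((fun ω => ω d.1.1) ⁻¹' S d.1.2) :=
        indep.meas_iInter fun d => ⟨S d.1.2, hS _, rfl⟩
    _ = ∏ d : (D : Set (α × Λ)), μ d.1.1 (S d.1.2) := Finset.prod_congr rfl fun d _ =>
        (measurePreserving_eval μ d.1.1).measure_preimage (hS _).nullMeasurableSet
    _ = ∏ d ∈ D, μ d.1 (S d.2) := Finset.prod_coe_sort D fun d => μ d.1 (S d.2)

lemma pi_constraintEvent_le (hS : ∀ i, MeasurableSet (S i))
    (hdisj : Pairwise (Function.onFun Disjoint S)) (D : Finset (α × Λ)) :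
    Measure.pi μ (constraintEvent S D) ≤ ∏ d ∈ D, μ d.1 (S d.2) := by
  by_cases hD : InjOn Prod.fst (D : Set (α × Λ))
  · exact (pi_constraintEvent μ hS hD).le
  · simp only [constraintEvent_eq_empty hdisj hD, measure_empty, zero_le]

end ConstraintEvent

section PartitePlacement

variable {V W κ ι Λ : Type*}

/-- The embedding of `W` into `V` that sends each `x` into its own part `g '' ({x} × κ)`, to the
position `φ x` of that part. -/
def partiteEmbedding (g : W × κ ↪ V) (φ : W → κ) : W ↪ V :=
  ⟨fun x => g (x, φ x), fun _ _ h => congrArg Prod.fst (g.injective h)⟩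

lemma map_partiteEmbedding_eq_map_iff {g : W × κ ↪ V} {φ φ' : W → κ} {e e' : Sym2 W} :
    e.map (partiteEmbedding g φ) = e'.map (partiteEmbedding g φ') ↔
      e = e' ∧ ∀ x ∈ e, φ x = φ' x := by
  have factor (φ : W → κ) (e : Sym2 W) :
      e.map (partiteEmbedding g φ) = (e.map fun x => (x, φ x)).map g := by
    rw [Sym2.map_map]; rfl
  simp only [factor, (Sym2.map.injective g.injective).eq_iff]
  constructor
  · intro h
    obtain rfl : e = e' := by
      simpa [Sym2.map_map, Function.comp_def] using congrArg (Sym2.map Prod.fst) h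
    refine ⟨rfl, fun x hx => ?_⟩
    have hmem : (x, φ x) ∈ e.map fun x => (x, φ' x) := h ▸ Sym2.mem_map.2 ⟨x, hx, rfl⟩
    obtain ⟨y, -, hy⟩ := Sym2.mem_map.1 hmem
    obtain ⟨rfl, hφ⟩ := Prod.mk.inj hy
    exact hφ.symm
  · rintro ⟨rfl, h⟩
    exact Sym2.map_congr fun x hx => by rw [h x hx]

lemma map_partiteEmbedding_injective (g : W × κ ↪ V) (φ : W → κ) :
    Function.Injective (Sym2.map (partiteEmbedding g φ)) :=
  Sym2.map.injective (partiteEmbedding g φ).injective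

variable [DecidableEq V] [DecidableEq ι] [DecidableEq Λ]

/-- The constraints that place the edge set `E` in the window `a.1` along the partite embedding
given by `a.2`: the image of `e` has to satisfy the constraint of level `lev e` in that window. -/
def placement (E : Finset (Sym2 W)) (g : W × κ ↪ V) (lev : Sym2 W → Λ) (a : ι × (W → κ)) :
    Finset (Sym2 V × (ι × Λ)) :=
  E.image fun e => (e.map (partiteEmbedding g a.2), (a.1, lev e))

variable {E : Finset (Sym2 W)} {g : W × κ ↪ V} {lev : Sym2 W → Λ}

lemma injOn_fst_placement (a : ι × (W → κ)) :
    InjOn Prod.fst (placement E g lev a : Set (Sym2 V × (ι × Λ))) := by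
  simp only [placement, Finset.coe_image, InjOn, forall_mem_image]
  intro e _ e' _ h
  rw [map_partiteEmbedding_injective g a.2 h]

lemma card_placement (a : ι × (W → κ)) : (placement E g lev a).card = E.card :=
  Finset.card_image_of_injective _ fun _ _ h =>
    map_partiteEmbedding_injective g a.2 (congrArg Prod.fst h)

lemma placement_inter_eq_empty {a b : ι × (W → κ)} (hab : a.1 ≠ b.1) :
    placement E g lev a ∩ placement E g lev b = ∅ := by
  simp only [← Finset.disjoint_iff_inter_eq_empty, Finset.disjoint_left, placement,
    Finset.mem_image, not_exists, not_and]
  rintro _ ⟨e, _, rfl⟩ e' _ h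
  exact hab (congrArg (fun d => d.2.1) h).symm

variable [Fintype W] [DecidableEq κ]

/-- The set on which two functions agree. -/
def agreement (φ φ' : W → κ) : Finset W := {x | φ x = φ' x}

lemma mem_sym2_agreement {φ φ' : W → κ} {e : Sym2 W} :
    e ∈ (agreement φ φ').sym2 ↔ ∀ x ∈ e, φ x = φ' x := by
  simp only [Finset.mem_sym2_iff, agreement, Finset.mem_filter_univ]

variable [DecidableEq W]

lemma placement_inter {a b : ι × (W → κ)} (hab : a.1 = b.1) :
    placement E g lev a ∩ placement E g lev b =
      placement (E ∩ (agreement a.2 b.2).sym2) g lev a := by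
  ext d
  simp only [placement, Finset.mem_inter, Finset.mem_image, mem_sym2_agreement]
  constructor
  · rintro ⟨⟨e, he, rfl⟩, e', -, h⟩
    obtain ⟨rfl, h'⟩ := map_partiteEmbedding_eq_map_iff.1 (congrArg Prod.fst h).symm
    exact ⟨e, ⟨he, h'⟩, rfl⟩
  · rintro ⟨e, ⟨he, h⟩, rfl⟩
    exact ⟨⟨e, he, rfl⟩, e, he,
      Prod.ext (map_partiteEmbedding_eq_map_iff.2 ⟨rfl, h⟩).symm (Prod.ext hab.symm rfl)⟩

/-- The error term of the second moment method for the placements of `E` in one of `N` windows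
along a partite embedding with `k` positions per vertex, when a constraint has probability `p`: the
summand of `S` is the contribution of the pairs of placements whose embeddings agree exactly on
`S`. -/
def secondMomentError (E : Finset (Sym2 W)) (N k p : ℝ) : ℝ :=
  ∑ S : Finset W with (E ∩ S.sym2).Nonempty, (N * k ^ S.card * p ^ (E ∩ S.sym2).card)⁻¹

lemma secondMomentError_nonneg {N k p : ℝ} (hN : 0 ≤ N) (hk : 0 ≤ k) (hp : 0 ≤ p) :
    0 ≤ secondMomentError E N k p :=
  Finset.sum_nonneg fun _ _ => by positivity

lemma inv_pow_card_placement_inter_le {p : ℝ} (hp : 0 ≤ p) (a b : ι × (W → κ)) :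
    (p ^ (placement E g lev a ∩ placement E g lev b).card)⁻¹ ≤
      1 + ∑ S : Finset W with (E ∩ S.sym2).Nonempty,
        if a.1 = b.1 ∧ agreement a.2 b.2 = S then (p ^ (E ∩ S.sym2).card)⁻¹ else 0 := by
  have hnonneg : ∀ S : Finset W, 0 ≤
      if a.1 = b.1 ∧ agreement a.2 b.2 = S then (p ^ (E ∩ S.sym2).card)⁻¹ else 0 := fun S => by
    positivity
  by_cases h : a.1 = b.1 ∧ (E ∩ (agreement a.2 b.2).sym2).Nonempty
  · refine le_add_of_nonneg_of_le zero_le_one ?_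
    refine le_trans ?_ (Finset.single_le_sum (fun S _ => hnonneg S)
      ((Finset.mem_filter_univ _).2 h.2))
    rw [placement_inter h.1, card_placement, if_pos ⟨h.1, rfl⟩]
  · have hcard : (placement E g lev a ∩ placement E g lev b).card = 0 := by
      by_cases hab : a.1 = b.1
      · rw [placement_inter hab, card_placement, Finset.card_eq_zero]
        exact Finset.not_nonempty_iff_eq_empty.1 fun h' => h ⟨hab, h'⟩
      · rw [placement_inter_eq_empty hab, Finset.card_empty]
    rw [hcard, pow_zero, inv_one]
    exact le_add_of_nonneg_right (Finset.sum_nonneg fun S _ => hnonneg S)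

variable [Fintype κ]

lemma card_filter_agreement_eq_mul_le (φ : W → κ) (S : Finset W) :
    ({φ' | agreement φ φ' = S} : Finset (W → κ)).card * Fintype.card κ ^ S.card ≤
      Fintype.card (W → κ) := by
  have hsub : ({φ' | agreement φ φ' = S} : Finset (W → κ)) ⊆
      Fintype.piFinset fun x => if x ∈ S then {φ x} else Finset.univ := by
    intro φ' h
    obtain rfl := Finset.mem_filter_univ _ |>.1 h
    refine Fintype.mem_piFinset.2 fun x => ?_
    split_ifs with hx
    · simpa [agreement, eq_comm] using hx
    · exact Finset.mem_univ _
  calc _ ≤ (∏ x, if x ∈ S then 1 else Fintype.card κ) *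
          ∏ x, if x ∈ S then Fintype.card κ else 1 := by
        rw [Finset.prod_ite_mem, Finset.univ_inter, Finset.prod_const]
        refine Nat.mul_le_mul_right _ ((Finset.card_le_card hsub).trans_eq ?_)
        simp only [Fintype.card_piFinset, apply_ite Finset.card, Finset.card_singleton,
          Finset.card_univ]
    _ = ∏ _ : W, Fintype.card κ := by
        rw [← Finset.prod_mul_distrib]
        exact Finset.prod_congr rfl fun x _ => by split_ifs <;> simp
    _ = Fintype.card (W → κ) := by simp

variable [Fintype ι]

lemma card_filter_fst_eq_agreement_eq_mul_le (a : ι × (W → κ)) (S : Finset W) :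
    ({b | a.1 = b.1 ∧ agreement a.2 b.2 = S} : Finset (ι × (W → κ))).card *
      (Fintype.card ι * Fintype.card κ ^ S.card) ≤ Fintype.card (ι × (W → κ)) := by
  have hprod : ({b | a.1 = b.1 ∧ agreement a.2 b.2 = S} : Finset (ι × (W → κ))) =
      {a.1} ×ˢ ({φ' | agreement a.2 φ' = S} : Finset (W → κ)) := by
    ext b
    simp only [Finset.mem_filter_univ, Finset.mem_product, Finset.mem_singleton, eq_comm]
  rw [hprod, Finset.card_product, Finset.card_singleton, one_mul, mul_left_comm, Fintype.card_prod]
  exact Nat.mul_le_mul_left _ (card_filter_agreement_eq_mul_le a.2 S)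

end PartitePlacement

section PlacementEvent

variable {V W κ ι Λ : Type*} [DecidableEq V] [DecidableEq ι] [DecidableEq Λ]
  {E : Finset (Sym2 W)} {g : W × κ ↪ V} {lev : Sym2 W → Λ} {p : ℝ}

lemma sum_inv_pow_card_placement_inter_le [Fintype W] [DecidableEq W] [Fintype κ] [Nonempty κ]
    [Fintype ι] [Nonempty ι] (hp : 0 ≤ p) (a : ι × (W → κ)) :
    ∑ b, (p ^ (placement E g lev a ∩ placement E g lev b).card)⁻¹ ≤
      Fintype.card (ι × (W → κ)) *
        (1 + secondMomentError E (Fintype.card ι) (Fintype.card κ) p) := by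
  classical
  refine (Finset.sum_le_sum fun b _ => inv_pow_card_placement_inter_le hp a b).trans ?_
  rw [Finset.sum_add_distrib, Finset.sum_comm, mul_add, secondMomentError, Finset.mul_sum]
  refine add_le_add (by simp) (Finset.sum_le_sum fun S _ => ?_)
  have hcount : (({b | a.1 = b.1 ∧ agreement a.2 b.2 = S} : Finset (ι × (W → κ))).card : ℝ) ≤
      Fintype.card (ι × (W → κ)) / (Fintype.card ι * Fintype.card κ ^ S.card) := by
    rw [le_div_iff₀ (by positivity)]
    exact_mod_cast card_filter_fst_eq_agreement_eq_mul_le a S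
  rw [← Finset.sum_filter, Finset.sum_const, nsmul_eq_mul, mul_inv, ← mul_assoc, ← div_eq_mul_inv]
  exact mul_le_mul_of_nonneg_right hcount (by positivity)

variable {X : Type*} [MeasurableSpace X] {Q : Measure X} [IsProbabilityMeasure Q]
  {S : ι × Λ → Set X} [Fintype V]

lemma measureReal_placement (hS : ∀ i, MeasurableSet (S i)) (hp : ∀ i, Q.real (S i) = p)
    (a : ι × (W → κ)) :
    (Measure.pi fun _ => Q).real (constraintEvent S (placement E g lev a)) = p ^ E.card := by
  rw [Measure.real, pi_constraintEvent _ hS (injOn_fst_placement a), ENNReal.toReal_prod,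
    ← card_placement (g := g) (lev := lev) a]
  exact Finset.prod_eq_pow_card fun d _ => hp d.2

lemma measureReal_placement_inter_le (hS : ∀ i, MeasurableSet (S i))
    (hdisj : Pairwise (Function.onFun Disjoint S)) (hp : ∀ i, Q.real (S i) = p) (hp₀ : 0 < p)
    (a b : ι × (W → κ)) :
    (Measure.pi fun _ => Q).real (constraintEvent S (placement E g lev a) ∩
        constraintEvent S (placement E g lev b)) ≤
      (p ^ E.card) ^ 2 * (p ^ (placement E g lev a ∩ placement E g lev b).card)⁻¹ := by
  set D := placement E g lev a ∪ placement E g lev b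
  have hD : (Measure.pi fun _ => Q).real (constraintEvent S D) ≤ p ^ D.card := by
    have h := ENNReal.toReal_mono (ENNReal.prod_ne_top fun _ _ => measure_ne_top _ _)
      (pi_constraintEvent_le (fun _ => Q) hS hdisj D)
    rwa [ENNReal.toReal_prod, Finset.prod_eq_pow_card fun d _ => hp d.2] at h
  rw [constraintEvent_inter]
  refine hD.trans_eq ?_
  rw [eq_mul_inv_iff_mul_eq₀ (by positivity), ← pow_add, Finset.card_union_add_card_inter,
    card_placement, card_placement, ← two_mul, pow_mul']

variable [Fintype W] [DecidableEq W] [Fintype κ] [Nonempty κ] [Fintype ι] [Nonempty ι]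

lemma sum_measureReal_placement_inter_le (hS : ∀ i, MeasurableSet (S i))
    (hdisj : Pairwise (Function.onFun Disjoint S)) (hp : ∀ i, Q.real (S i) = p) (hp₀ : 0 < p) :
    ∑ a : ι × (W → κ), ∑ b : ι × (W → κ), (Measure.pi fun _ => Q).real
        (constraintEvent S (placement E g lev a) ∩ constraintEvent S (placement E g lev b)) ≤
      (Fintype.card (ι × (W → κ)) * p ^ E.card) ^ 2 *
        (1 + secondMomentError E (Fintype.card ι) (Fintype.card κ) p) := by
  calc _ ≤ ∑ a : ι × (W → κ), (p ^ E.card) ^ 2 *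
          ∑ b, (p ^ (placement E g lev a ∩ placement E g lev b).card)⁻¹ := by
        simp only [Finset.mul_sum]
        gcongr with a _ b _
        exact measureReal_placement_inter_le hS hdisj hp hp₀ a b
    _ ≤ ∑ _ : ι × (W → κ), (p ^ E.card) ^ 2 * (Fintype.card (ι × (W → κ)) *
          (1 + secondMomentError E (Fintype.card ι) (Fintype.card κ) p)) := by
        gcongr with a _
        exact sum_inv_pow_card_placement_inter_le hp₀.le a
    _ = _ := by
        rw [Finset.sum_const, Finset.card_univ, nsmul_eq_mul]
        ring

theorem inv_one_add_secondMomentError_le_measureReal_iUnion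
    (hS : ∀ i, MeasurableSet (S i))
    (hdisj : Pairwise (Function.onFun Disjoint S)) (hp : ∀ i, Q.real (S i) = p) (hp₀ : 0 < p) :
    (1 + secondMomentError E (Fintype.card ι) (Fintype.card κ) p)⁻¹ ≤
      (Measure.pi fun _ => Q).real
        (⋃ a : ι × (W → κ), constraintEvent S (placement E g lev a)) := by
  set M := (Fintype.card (ι × (W → κ)) : ℝ)
  set err := secondMomentError E (Fintype.card ι) (Fintype.card κ) p
  set μ := Measure.pi fun _ : Sym2 V => Q
  set A : ι × (W → κ) → Set (Sym2 V → X) := fun a => constraintEvent S (placement E g lev a)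
  have hM : 0 < M := by positivity
  have herr : 0 ≤ err := secondMomentError_nonneg (by positivity) (by positivity) hp₀.le
  have first_moment : ∑ a, μ.real (A a) = M * p ^ E.card := by
    simp only [A, μ, measureReal_placement hS hp, Finset.sum_const, Finset.card_univ,
      nsmul_eq_mul, M]
  have second_moment : ∑ a, ∑ b, μ.real (A a ∩ A b) ≤ (M * p ^ E.card) ^ 2 * (1 + err) :=
    sum_measureReal_placement_inter_le hS hdisj hp hp₀
  have chung_erdos : (M * p ^ E.card) ^ 2 ≤
      μ.real (⋃ a, A a) * ∑ a, ∑ b, μ.real (A a ∩ A b) := by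
    simpa only [first_moment, Finset.mem_univ, iUnion_true] using
      sq_sum_measureReal_le_measureReal_biUnion_mul (s := Finset.univ) μ (A := A) fun a _ =>
        measurableSet_constraintEvent hS _
  rw [inv_le_iff_one_le_mul₀ (by positivity)]
  refine le_of_mul_le_mul_left ?_ (pow_pos (mul_pos hM (pow_pos hp₀ E.card)) 2)
  calc (M * p ^ E.card) ^ 2 * 1
      ≤ μ.real (⋃ a, A a) * ((M * p ^ E.card) ^ 2 * (1 + err)) := by
        rw [mul_one]
        exact chung_erdos.trans (mul_le_mul_of_nonneg_left second_moment measureReal_nonneg)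
    _ = (M * p ^ E.card) ^ 2 * (μ.real (⋃ a, A a) * (1 + err)) := by ring

end PlacementEvent

section Labels

/-- The label data consisting of a given `k`-tuple of labels. -/
abbrev labelTuple (k : ℕ) (f : Fin k → ℝ) : LabelSpace := ⟨k, f⟩

/-- The label data whose first label exists and lies in `I`. -/
def firstLabelIn (I : Set ℝ) : Set LabelSpace := {x | ∃ h : 0 < x.1, x.2 ⟨0, h⟩ ∈ I}

lemma measurableSet_labelSpace_iff {s : Set LabelSpace} :
    MeasurableSet s ↔ ∀ k : ℕ, MeasurableSet (labelTuple k ⁻¹' s) :=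
  MeasurableSpace.measurableSet_iInf

lemma labelTuple_preimage_firstLabelIn_of_pos {k : ℕ} (hk : 0 < k) (I : Set ℝ) :
    labelTuple k ⁻¹' firstLabelIn I = Function.eval ⟨0, hk⟩ ⁻¹' I := by
  ext f
  simp [firstLabelIn, hk]

lemma labelTuple_zero_preimage_firstLabelIn (I : Set ℝ) :
    labelTuple 0 ⁻¹' firstLabelIn I = ∅ := by
  ext f
  simp [firstLabelIn]

lemma measurableSet_firstLabelIn {I : Set ℝ} (hI : MeasurableSet I) :
    MeasurableSet (firstLabelIn I) := by
  refine measurableSet_labelSpace_iff.2 fun k => ?_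
  obtain rfl | hk := k.eq_zero_or_pos
  · simp only [labelTuple_zero_preimage_firstLabelIn, MeasurableSet.empty]
  · rw [labelTuple_preimage_firstLabelIn_of_pos hk]
    exact measurable_pi_apply _ hI

lemma disjoint_firstLabelIn {I J : Set ℝ} (h : Disjoint I J) :
    Disjoint (firstLabelIn I) (firstLabelIn J) :=
  disjoint_left.2 fun _ ⟨_, hI⟩ ⟨_, hJ⟩ => disjoint_left.1 h hI hJ

lemma edgeMeasure_apply (ν : Measure ℝ) (ψ : Measure ℕ) {s : Set LabelSpace}
    (hs : MeasurableSet s) :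
    edgeMeasure ν ψ s = ∑' k, ψ {k} * (Measure.pi fun _ : Fin k => ν) (labelTuple k ⁻¹' s) := by
  have hmk (k : ℕ) : Measurable (labelTuple k) := fun t ht =>
    measurableSet_labelSpace_iff.1 ht k
  simp only [edgeMeasure, Measure.sum_apply _ hs, Measure.smul_apply, smul_eq_mul,
    Measure.map_apply (hmk _) hs]

variable {ν : Measure ℝ} [IsProbabilityMeasure ν] {ψ : Measure ℕ}

instance [IsProbabilityMeasure ψ] : IsProbabilityMeasure (edgeMeasure ν ψ) where
  measure_univ := by
    have h := Measure.tsum_indicator_apply_singleton ψ univ .univ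
    simpa only [edgeMeasure_apply ν ψ .univ, preimage_univ, measure_univ, mul_one,
      indicator_univ] using h

instance {V : Type*} [Fintype V] [DecidableEq V] [IsProbabilityMeasure ψ] :
    IsProbabilityMeasure (model V ν ψ) := by
  unfold model
  infer_instance

lemma edgeMeasure_firstLabelIn {I : Set ℝ} (hI : MeasurableSet I) :
    edgeMeasure ν ψ (firstLabelIn I) = ψ {k | 0 < k} * ν I := by
  rw [edgeMeasure_apply ν ψ (measurableSet_firstLabelIn hI),
    ← Measure.tsum_indicator_apply_singleton ψ {k | 0 < k} .of_discrete, ← ENNReal.tsum_mul_right]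
  refine tsum_congr fun k => ?_
  obtain rfl | hk := k.eq_zero_or_pos
  · simp [labelTuple_zero_preimage_firstLabelIn]
  · rw [labelTuple_preimage_firstLabelIn_of_pos hk, indicator_of_mem (s := {k | 0 < k}) hk,
      (measurePreserving_eval (fun _ : Fin k => ν) ⟨0, hk⟩).measure_preimage hI.nullMeasurableSet]

lemma lmdPos_pos {ψ : Measure ℕ} (hψ : IsLMD ψ) : 0 < lmdPos ψ := by
  obtain ⟨hprob, -, -, hmean⟩ := hψ
  refine ENNReal.toReal_pos (fun h₀ => hmean.ne' ?_) (measure_ne_top _ _)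
  refine integral_eq_zero_of_ae ((measure_eq_zero_iff_ae_notMem.1 h₀).mono fun k hk => ?_)
  simpa using hk

instance (T : ℕ) [NeZero T] : IsProbabilityMeasure (unifDisc T) where
  measure_univ := by
    simp only [unifDisc, Measure.smul_apply, Measure.finsetSum_apply, measure_univ,
      Finset.sum_const, Nat.card_Icc, smul_eq_mul, nsmul_eq_mul, mul_one, Nat.add_sub_cancel]
    exact ENNReal.inv_mul_cancel (by simp [NeZero.ne T]) (ENNReal.natCast_ne_top T)

lemma unifDisc_real_Ioc {T u w : ℕ} (huw : u ≤ w) (hw : w ≤ T) :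
    (unifDisc T).real (Ioc (u : ℝ) w) = (w - u) / T := by
  have hfilter : {k ∈ Finset.Icc 1 T | k ∈ Finset.Ioc u w} = Finset.Ioc u w := by
    ext k
    simp only [Finset.mem_filter, Finset.mem_Icc, Finset.mem_Ioc]
    lia
  have hdirac (k : ℕ) : Measure.dirac (k : ℝ) (Ioc (u : ℝ) w) =
      if k ∈ Finset.Ioc u w then 1 else 0 := by
    simp only [Measure.dirac_apply' _ measurableSet_Ioc, indicator_apply, mem_Ioc, Finset.mem_Ioc,
      Nat.cast_lt, Nat.cast_le, Pi.one_apply]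
  simp only [Measure.real, unifDisc, Measure.smul_apply, Measure.finsetSum_apply, hdirac,
    ← Finset.sum_filter, hfilter, Finset.sum_const, Nat.card_Ioc, nsmul_eq_mul, mul_one,
    smul_eq_mul, ENNReal.toReal_mul, ENNReal.toReal_inv, ENNReal.toReal_natCast, Nat.cast_sub huw,
    inv_mul_eq_div]

end Labels

section TimeSlots

variable {N h b : ℕ}

/-- The `i.2`-th of the `h` consecutive time slots of length `b` that make up the `i.1`-th of `N`
consecutive time windows. Slots are half-open so that exactly `b` of the labels `1, 2, …` lie in
each of them. -/
def timeSlot (b : ℕ) (i : Fin N × Fin h) : Set ℝ :=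
  Ioc ((finProdFinEquiv i * b : ℕ) : ℝ) (((finProdFinEquiv i + 1) * b : ℕ) : ℝ)

lemma measurableSet_timeSlot (i : Fin N × Fin h) : MeasurableSet (timeSlot b i) :=
  measurableSet_Ioc

lemma pairwise_disjoint_timeSlot :
    Pairwise (Function.onFun Disjoint (timeSlot b : Fin N × Fin h → Set ℝ)) := by
  have hmono : Monotone fun m : ℕ => ((m * b : ℕ) : ℝ) := Nat.mono_cast.comp fun _ _ hm =>
    Nat.mul_le_mul_right b hm
  exact hmono.pairwise_disjoint_on_Ioc_succ.comp_of_injective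
    (Fin.val_injective.comp finProdFinEquiv.injective)

lemma unifDisc_real_timeSlot {T : ℕ} (hT : N * (h * b) ≤ T) (i : Fin N × Fin h) :
    (unifDisc T).real (timeSlot b i) = b / T := by
  have hlast : (finProdFinEquiv i + 1) * b ≤ T := by
    rw [← mul_assoc] at hT
    exact (Nat.mul_le_mul_right b (finProdFinEquiv i).isLt).trans hT
  rw [timeSlot, unifDisc_real_Ioc (Nat.mul_le_mul_right b (Nat.le_succ _)) hlast]
  push_cast
  ring

lemma lt_of_mem_timeSlot {j : Fin N} {l l' : Fin h} (hl : l < l') {x y : ℝ}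
    (hx : x ∈ timeSlot b (j, l)) (hy : y ∈ timeSlot b (j, l')) : x < y := by
  have hslots : (finProdFinEquiv (j, l) + 1 : ℕ) * b ≤ finProdFinEquiv (j, l') * b := by
    refine Nat.mul_le_mul_right b ?_
    simp only [finProdFinEquiv_apply_val]
    lia
  exact (hx.2.trans (by exact_mod_cast hslots)).trans_lt hy.1

lemma sub_lt_of_mem_timeSlot {j : Fin N} {l l' : Fin h} {x y : ℝ}
    (hx : x ∈ timeSlot b (j, l)) (hy : y ∈ timeSlot b (j, l')) : x - y < h * b := by
  have hslots : (finProdFinEquiv (j, l) + 1 : ℕ) * b ≤ finProdFinEquiv (j, l') * b + h * b := by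
    rw [← add_mul]
    refine Nat.mul_le_mul_right b ?_
    simp only [finProdFinEquiv_apply_val]
    lia
  have hslots' : (((finProdFinEquiv (j, l) + 1 : ℕ) * b : ℕ) : ℝ) ≤
      ((finProdFinEquiv (j, l') * b : ℕ) : ℝ) + h * b := by exact_mod_cast hslots
  linarith [hx.2, hy.1]

end TimeSlots

section MotifProbability

variable {V W κ ι Λ : Type*} [DecidableEq V] [Preorder Λ]
  {H : SimpleGraph W} [Fintype H.edgeSet] {P : Sym2 W → Sym2 W → Prop} {lev : Sym2 W → Λ}
  {I : ι × Λ → Set ℝ} {δ : ℝ} {g : W × κ ↪ V}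

lemma contains_of_mem_constraintEvent_placement [DecidableEq ι] [DecidableEq Λ]
    (hP : ∀ e f, P e f → e ∈ H.edgeSet ∧ f ∈ H.edgeSet) (hlev : ∀ e f, P e f → lev e < lev f)
    (hlt : ∀ j l l', l < l' → ∀ x ∈ I (j, l), ∀ y ∈ I (j, l'), x < y)
    (hspan : ∀ j l l', ∀ x ∈ I (j, l), ∀ y ∈ I (j, l'), x - y < δ)
    {ω : Sym2 V → LabelSpace} {a : ι × (W → κ)}
    (hω : ω ∈ constraintEvent (fun i => firstLabelIn (I i)) (placement H.edgeFinset g lev a)) :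
    Contains H P (toTGraph ω) δ := by
  set Φ := partiteEmbedding g a.2
  have first_label : ∀ e ∈ H.edgeSet, ∃ x ∈ toTGraph ω (e.map Φ), x ∈ I (a.1, lev e) := by
    intro e he
    obtain ⟨h₀, hI⟩ := hω _ (Finset.mem_image_of_mem _ (SimpleGraph.mem_edgeFinset.2 he))
    refine ⟨_, ?_, hI⟩
    rw [toTGraph, if_neg ((Sym2.isDiag_map Φ.injective).not.2 (H.not_isDiag_of_mem_edgeSet he))]
    exact Finset.mem_image_of_mem _ (Finset.mem_univ _)
  choose! lab hlab hslot using first_label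
  refine ⟨Φ, Φ.injective, lab, hlab, fun e f hef => ?_, fun e he f hf => ?_⟩
  · obtain ⟨he, hf⟩ := hP e f hef
    exact hlt _ _ _ (hlev e f hef) _ (hslot e he) _ (hslot f hf)
  · exact hspan _ _ _ _ (hslot e he) _ (hslot f hf)

variable [Fintype V] [Fintype W] [DecidableEq W] {ψ : Measure ℕ} [IsProbabilityMeasure ψ]

theorem inv_one_add_secondMomentError_le_model_contains [Fintype κ] [Nonempty κ] [Fintype ι]
    [Nonempty ι] {ν : Measure ℝ} [IsProbabilityMeasure ν]
    (hP : ∀ e f, P e f → e ∈ H.edgeSet ∧ f ∈ H.edgeSet) (g : W × κ ↪ V)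
    (hlev : ∀ e f, P e f → lev e < lev f)
    (hI : ∀ i, MeasurableSet (I i)) (hdisj : Pairwise (Function.onFun Disjoint I))
    (hlt : ∀ j l l', l < l' → ∀ x ∈ I (j, l), ∀ y ∈ I (j, l'), x < y)
    (hspan : ∀ j l l', ∀ x ∈ I (j, l), ∀ y ∈ I (j, l'), x - y < δ)
    {p : ℝ} (hp : ∀ i, lmdPos ψ * ν.real (I i) = p) (hp₀ : 0 < p) :
    (1 + secondMomentError H.edgeFinset (Fintype.card ι) (Fintype.card κ) p)⁻¹ ≤
      (model V ν ψ).real {ω | Contains H P (toTGraph ω) δ} := by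
  classical
  have hQ (i : ι × Λ) : (edgeMeasure ν ψ).real (firstLabelIn (I i)) = p := by
    rw [Measure.real, edgeMeasure_firstLabelIn (hI i), ENNReal.toReal_mul, ← hp i]
    rfl
  refine (inv_one_add_secondMomentError_le_measureReal_iUnion (g := g) (lev := lev)
    (fun i => measurableSet_firstLabelIn (hI i))
    (hdisj.mono fun _ _ h => disjoint_firstLabelIn h) hQ hp₀).trans ?_
  refine measureReal_mono (iUnion_subset fun a ω hω => ?_) (measure_ne_top (model V ν ψ) _)
  exact contains_of_mem_constraintEvent_placement hP hlev hlt hspan hω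

theorem inv_one_add_secondMomentError_le_discModel_contains {N h b k T β : ℕ}
    (hP : ∀ e f, P e f → e ∈ H.edgeSet ∧ f ∈ H.edgeSet) {lev : Sym2 W → Fin h}
    (hlev : ∀ e f, P e f → lev e < lev f) (hψ : 0 < lmdPos ψ) (hN : 0 < N) (hb : 0 < b)
    (hk : 0 < k) (hT₀ : 0 < T) (hT : N * (h * b) ≤ T) (hβ : h * b ≤ β)
    (hV : Fintype.card W * k ≤ Fintype.card V) :
    (1 + secondMomentError H.edgeFinset N k (lmdPos ψ * (b / T)))⁻¹ ≤
      (discModel V ψ T).real {ω | Contains H P (toTGraph ω) β} := by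
  have : NeZero N := ⟨hN.ne'⟩
  have : NeZero k := ⟨hk.ne'⟩
  have : NeZero T := ⟨hT₀.ne'⟩
  obtain ⟨g⟩ : Nonempty (W × Fin k ↪ V) :=
    Function.Embedding.nonempty_of_card_le (by simpa using hV)
  have hwindow : (h * b : ℝ) ≤ β := by exact_mod_cast hβ
  have hbound := inv_one_add_secondMomentError_le_model_contains (ι := Fin N) (I := timeSlot b)
    (ν := unifDisc T) hP g hlev measurableSet_timeSlot pairwise_disjoint_timeSlot
    (fun _ _ _ hl _ hx _ hy => lt_of_mem_timeSlot hl hx hy)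
    (fun _ _ _ _ hx _ hy => (sub_lt_of_mem_timeSlot hx hy).trans_le hwindow)
    (fun i => by rw [unifDisc_real_timeSlot hT]) (by positivity)
  simpa only [Fintype.card_fin] using hbound

end MotifProbability

section ChainHeight

variable {α : Type*} {r : α → α → Prop} {s : Set α}

lemma chainHeight_le_of_forall_finset_card_le {n : ℕ} (hs : s.Finite)
    (h : ∀ t : Finset α, ↑t ⊆ s → IsChain r ↑t → t.card ≤ n) :
    s.chainHeight r ≤ n := by
  obtain ⟨t, hts, ht, hchain⟩ := exists_eq_chainHeight_of_finite s r hs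
  lift t to Finset α using hs.subset hts
  rw [← ht, encard_coe_eq_coe_finsetCard]
  exact_mod_cast h t hts hchain

lemma chainHeight_below_add_one_le {a : α} (hr : ¬ r a a) (ha : a ∈ s) (hs : {x | r x a} ⊆ s) :
    {x | r x a}.chainHeight r + 1 ≤ s.chainHeight r := by
  have : Nonempty {t // t ⊆ {x | r x a} ∧ IsChain r t} :=
    ⟨∅, empty_subset _, IsChain.empty⟩
  rw [chainHeight_eq_iSup, ENat.iSup_add]
  refine iSup_le fun ⟨t, ht, hchain⟩ => ?_
  rw [← encard_insert_of_notMem fun hat => hr (ht hat)]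
  exact encard_le_chainHeight_of_isChain s _ (insert_subset ha (ht.trans hs))
    (hchain.insert fun x hx _ => Or.inr (ht hx))

/- The level of `a` is the height of the part of the order strictly below `a`. -/
lemma StrictPartialOrderOn.exists_strictMono_fin (hr : StrictPartialOrderOn s r) (hs : s.Finite)
    (hne : s.Nonempty) :
    ∃ (h : ℕ) (lev : α → Fin h), (h : ℕ∞) = s.chainHeight r ∧ ∀ a b, r a b → lev a < lev b := by
  obtain ⟨hirrefl, htrans, hsupp⟩ := hr
  obtain ⟨h, hh⟩ := ENat.ne_top_iff_exists.1 (chainHeight_ne_top_of_finite s r hs)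
  have below_subset (a : α) : {x | r x a} ⊆ s := fun x hx => (hsupp x a hx).1
  have hlt (a : α) : {x | r x a}.chainHeight r + 1 ≤ h := by
    rw [hh]
    by_cases ha : a ∈ s
    · exact chainHeight_below_add_one_le (hirrefl a) ha (below_subset a)
    · have hempty : {x | r x a} = ∅ := eq_empty_of_forall_notMem fun x hx => ha (hsupp x a hx).2
      simpa only [hempty, chainHeight_empty, zero_add, one_le_chainHeight_iff] using hne
  have hlev (a : α) : ∃ l : Fin h, (l : ℕ∞) = {x | r x a}.chainHeight r := by
    obtain ⟨l, hl⟩ := ENat.ne_top_iff_exists.1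
      (chainHeight_ne_top_of_finite _ r (hs.subset (below_subset a)))
    have hl_lt := hlt a
    rw [← hl] at hl_lt
    exact ⟨⟨l, by exact_mod_cast hl_lt⟩, hl⟩
  choose lev hlev using hlev
  refine ⟨h, lev, hh, fun a b hab => ?_⟩
  have hsucc := chainHeight_below_add_one_le (s := {x | r x b}) (hirrefl a) hab fun x hx =>
    htrans x a b hx hab
  rw [← hlev, ← hlev] at hsucc
  exact_mod_cast hsucc

end ChainHeight

section Sparsity

variable {W : Type*} {H : SimpleGraph W}

lemma sparsity_le (I : H.Subgraph) (hI : 2 ≤ I.edgeSet.ncard) :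
    sparsity H ≤ I.verts.ncard / (I.edgeSet.ncard - 1) := by
  refine csInf_le ⟨0, ?_⟩ ⟨I, hI, rfl⟩
  rintro _ ⟨J, hJ, rfl⟩
  have : (2 : ℝ) ≤ J.edgeSet.ncard := by exact_mod_cast hJ
  exact div_nonneg (Nat.cast_nonneg _) (by linarith)

variable [DecidableEq W] [Fintype H.edgeSet]

lemma edgeSet_induce_top (S : Finset W) :
    ((⊤ : H.Subgraph).induce S).edgeSet = H.edgeFinset ∩ S.sym2 := by
  ext e
  induction e with
  | _ x y => simp [and_assoc, and_comm]

lemma sparsity_mul_card_sub_one_le {S : Finset W} (hS : (H.edgeFinset ∩ S.sym2).Nonempty) :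
    sparsity H * ((H.edgeFinset ∩ S.sym2).card - 1 : ℕ) ≤ S.card := by
  obtain h | h := (Nat.one_le_iff_ne_zero.2 hS.card_ne_zero).eq_or_lt
  · simp [← h]
  · have hcard : ((⊤ : H.Subgraph).induce S).edgeSet.ncard = (H.edgeFinset ∩ S.sym2).card := by
      rw [edgeSet_induce_top, ncard_coe_finset]
    have hle := sparsity_le ((⊤ : H.Subgraph).induce S) (hcard ▸ h)
    rw [hcard, SimpleGraph.Subgraph.induce_verts, ncard_coe_finset] at hle
    have hpos : (0 : ℝ) < (H.edgeFinset ∩ S.sym2).card - 1 := by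
      rw [sub_pos]
      exact_mod_cast h
    rw [Nat.cast_sub h.le, Nat.cast_one]
    exact (le_div_iff₀ hpos).1 hle

end Sparsity

section Asymptotics

lemma tendsto_pow_mul_pow_atTop {x : ℕ → ℝ} {ρ : ℝ} {s f : ℕ} (hx : ∀ n, 0 ≤ x n) (hs : s ≠ 0)
    (hρ : ρ * f ≤ s) (hthr : Tendsto (fun n : ℕ => x n * (n : ℝ) ^ ρ) atTop atTop) :
    Tendsto (fun n : ℕ => (n : ℝ) ^ s * x n ^ f) atTop atTop := by
  obtain rfl | hf := eq_or_ne f 0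
  · simpa only [pow_zero, mul_one, Function.comp_def] using
      (tendsto_pow_atTop hs).comp (tendsto_natCast_atTop_atTop (R := ℝ))
  · refine tendsto_atTop_mono' _ ?_ ((tendsto_pow_atTop hf).comp hthr)
    filter_upwards [eventually_ge_atTop 1] with n hn
    have hn : (1 : ℝ) ≤ n := by exact_mod_cast hn
    calc (x n * (n : ℝ) ^ ρ) ^ f = (n : ℝ) ^ (ρ * f) * x n ^ f := by
          rw [mul_pow, mul_comm, Real.rpow_mul_natCast (by positivity)]
      _ ≤ (n : ℝ) ^ s * x n ^ f := by
          rw [← Real.rpow_natCast _ s]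
          exact mul_le_mul_of_nonneg_right (Real.rpow_le_rpow_of_exponent_le hn hρ)
            (pow_nonneg (hx n) f)

lemma tendsto_secondMomentError {W : Type*} [Fintype W] [DecidableEq W] {H : SimpleGraph W}
    [Fintype H.edgeSet] {x N k p : ℕ → ℝ} {c d : ℝ} (hx : ∀ n, 0 ≤ x n) (hc : 0 < c) (hd : 0 < d)
    (hN : ∀ᶠ n in atTop, c ≤ N n * p n) (hk : ∀ᶠ n : ℕ in atTop, d * n ≤ k n)
    (hp : ∀ᶠ n in atTop, c * x n ≤ p n)
    (hthr : Tendsto (fun n : ℕ => x n * (n : ℝ) ^ sparsity H) atTop atTop) :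
    Tendsto (fun n => secondMomentError H.edgeFinset (N n) (k n) (p n)) atTop (𝓝 0) := by
  rw [← Finset.sum_const_zero]
  refine tendsto_finsetSum _ fun S hS => Tendsto.inv_tendsto_atTop ?_
  have hne : (H.edgeFinset ∩ S.sym2).Nonempty := (Finset.mem_filter.1 hS).2
  have hS₀ : S.card ≠ 0 :=
    Finset.card_ne_zero.2 (Finset.sym2_nonempty.1 (hne.mono Finset.inter_subset_right))
  obtain ⟨f, hf⟩ := Nat.exists_eq_succ_of_ne_zero hne.card_ne_zero
  have hρ : sparsity H * f ≤ S.card := by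
    simpa only [hf, Nat.succ_sub_one] using sparsity_mul_card_sub_one_le hne
  have hmain := (tendsto_pow_mul_pow_atTop hx hS₀ hρ hthr).const_mul_atTop
    (show 0 < c * d ^ S.card * c ^ f by positivity)
  refine tendsto_atTop_mono' _ ?_ hmain
  filter_upwards [hN, hk, hp] with n hNn hkn hpn
  have hxn := hx n
  have hNp : 0 ≤ N n * p n := hc.le.trans hNn
  have hkn₀ : 0 ≤ k n := (by positivity : 0 ≤ d * n).trans hkn
  calc c * d ^ S.card * c ^ f * ((n : ℝ) ^ S.card * x n ^ f)
      = c * (d * n) ^ S.card * (c * x n) ^ f := by ring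
    _ ≤ N n * p n * k n ^ S.card * p n ^ f := by gcongr
    _ = N n * k n ^ S.card * p n ^ (H.edgeFinset ∩ S.sym2).card := by
        rw [hf, pow_succ]
        ring

end Asymptotics

section Rounding

lemma le_two_mul_mul_div {d m : ℕ} (hd : 0 < d) (hdm : d ≤ m) : m ≤ 2 * (d * (m / d)) := by
  have hpos : d * 1 ≤ d * (m / d) := Nat.mul_le_mul_left d ((Nat.one_le_div_iff hd).2 hdm)
  have hlt := Nat.lt_mul_div_succ m hd
  lia

lemma tendsto_secondMomentError_div {W : Type*} [Fintype W] [DecidableEq W] {H : SimpleGraph W}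
    [Fintype H.edgeSet] {β T : ℕ → ℕ} {h v : ℕ} {q : ℝ} (hq : 0 < q) (hh : 0 < h) (hv : 0 < v)
    (hβ : ∀ᶠ n in atTop, h ≤ β n) (hβT : ∀ n, β n ≤ T n)
    (hthr : Tendsto (fun n : ℕ => (β n : ℝ) / (T n : ℝ) * (n : ℝ) ^ sparsity H) atTop atTop) :
    Tendsto (fun n => secondMomentError H.edgeFinset (T n / (h * (β n / h)) : ℕ) (n / v : ℕ)
      (q * ((β n / h : ℕ) / T n))) atTop (𝓝 0) := by
  refine tendsto_secondMomentError (c := q / (2 * h)) (d := (2 * v : ℝ)⁻¹)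
    (fun n => by positivity) (by positivity) (by positivity) ?_ ?_ ?_ hthr
  · filter_upwards [hβ] with n hn
    have hb : 0 < h * (β n / h) := Nat.mul_pos hh (Nat.div_pos hn hh)
    have hbT : h * (β n / h) ≤ T n := (Nat.mul_div_le _ _).trans (hβT n)
    have hT : (0 : ℝ) < T n := by exact_mod_cast hb.trans_le hbT
    have hround : (T n : ℝ) ≤ 2 * (h * (β n / h : ℕ) * (T n / (h * (β n / h)) : ℕ)) := by
      exact_mod_cast le_two_mul_mul_div hb hbT
    calc q / (2 * h) = q / (2 * h) * T n / T n := by field_simp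
      _ ≤ q / (2 * h) * (2 * (h * (β n / h : ℕ) * (T n / (h * (β n / h)) : ℕ))) / T n := by
          gcongr
      _ = (T n / (h * (β n / h)) : ℕ) * (q * ((β n / h : ℕ) / T n)) := by field_simp
  · filter_upwards [eventually_ge_atTop v] with n hn
    rw [inv_mul_le_iff₀ (by positivity), mul_assoc]
    exact_mod_cast le_two_mul_mul_div hv hn
  · filter_upwards [hβ] with n hn
    have hround : (β n : ℝ) ≤ 2 * (h * (β n / h : ℕ)) := by
      exact_mod_cast le_two_mul_mul_div hh hn
    calc q / (2 * h) * (β n / T n) ≤ q / (2 * h) * (2 * (h * (β n / h : ℕ)) / T n) := by gcongr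
      _ = q * ((β n / h : ℕ) / T n) := by field_simp

end Rounding

theorem statement2_general {VH : Type*} [Finite VH] {H : SimpleGraph VH}
    (hH : 2 ≤ H.edgeSet.ncard) {P : Sym2 VH → Sym2 VH → Prop}
    (hP : StrictPartialOrderOn H.edgeSet P) {ψ : Measure ℕ} [IsProbabilityMeasure ψ]
    (hψ : 0 < lmdPos ψ) {β T : ℕ → ℕ} (hβT : ∀ n, β n ≤ T n)
    (hheight : ∀ᶠ n in atTop, H.edgeSet.chainHeight P ≤ β n)
    (hthr : Tendsto (fun n : ℕ => (β n : ℝ) / (T n : ℝ) * (n : ℝ) ^ sparsity H) atTop atTop) :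
    Tendsto (fun n : ℕ => discModel (Fin n) ψ (T n) {ω | Contains H P (toTGraph ω) (β n : ℝ)})
      atTop (𝓝 1) := by
  classical
  have := Fintype.ofFinite VH
  have hne : H.edgeSet.Nonempty := nonempty_of_ncard_ne_zero (by lia)
  obtain ⟨h, lev, hh, hlev⟩ := hP.exists_strictMono_fin H.edgeSet.toFinite hne
  obtain ⟨e, -⟩ := hne
  have hh₀ : 0 < h := (lev e).pos
  have hv : 0 < Fintype.card VH := Fintype.card_pos_iff.2 ⟨e.out.1⟩
  have hβ : ∀ᶠ n in atTop, h ≤ β n := hheight.mono fun n hn => by exact_mod_cast hh ▸ hn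
  have herror := (tendsto_secondMomentError_div hψ hh₀ hv hβ hβT hthr).const_add 1
  have hlower := ENNReal.tendsto_ofReal (herror.inv₀ (by norm_num))
  rw [add_zero, inv_one, ENNReal.ofReal_one] at hlower
  refine tendsto_of_tendsto_of_tendsto_of_le_of_le' hlower tendsto_const_nhds ?_ ?_
  · filter_upwards [hβ, eventually_ge_atTop (Fintype.card VH)] with n hn hvn
    have hb : 0 < β n / h := Nat.div_pos hn hh₀
    have hwindow : h * (β n / h) ≤ β n := Nat.mul_div_le _ _
    refine ENNReal.ofReal_le_of_le_toReal
      (inv_one_add_secondMomentError_le_discModel_contains hP.2.2 hlev hψ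
        (Nat.div_pos (hwindow.trans (hβT n)) (Nat.mul_pos hh₀ hb)) hb (Nat.div_pos hvn hv)
        ((hh₀.trans_le hn).trans_le (hβT n)) (Nat.div_mul_le_self _ _) hwindow ?_)
    rw [Fintype.card_fin]
    exact Nat.mul_div_le _ _
  · filter_upwards [hβ] with n hn
    have : NeZero (T n) := ⟨((hh₀.trans_le hn).trans_le (hβT n)).ne'⟩
    exact prob_le_one

/-- If `β(n)/T(n)·n^{ρ_H} → ∞` (and `β(n)` is eventually at least the
height of `P`), then a sample of `Γ_{[n]}(ψ, T(n))` contains `(H, P)` as a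
`β(n)`-temporal motif with high probability. -/
theorem statement2 {VH : Type} [Fintype VH] [DecidableEq VH] (H : SimpleGraph VH)
    (hH : 2 ≤ H.edgeSet.ncard)
    (P : Sym2 VH → Sym2 VH → Prop) (hP : StrictPartialOrderOn H.edgeSet P)
    (ψ : Measure ℕ) (hψ : IsLMD ψ)
    (β T : ℕ → ℕ) (hβT : ∀ n, β n ≤ T n)
    (hheight : ∃ n₀ : ℕ, ∀ n ≥ n₀, ∀ s : Finset (Sym2 VH),
      ↑s ⊆ H.edgeSet → IsChain P ↑s → s.card ≤ β n)
    (hthr : Tendsto (fun n : ℕ => (β n : ℝ) / (T n : ℝ) * (n : ℝ) ^ sparsity H)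
      atTop atTop) :
    Tendsto (fun n : ℕ =>
        discModel (Fin n) ψ (T n) {ω | Contains H P (toTGraph ω) (β n : ℝ)})
      atTop (𝓝 1) := by
  have := hψ.1
  obtain ⟨n₀, hn₀⟩ := hheight
  exact statement2_general hH hP (lmdPos_pos hψ) hβT (eventually_atTop.2 ⟨n₀, fun n hn =>
    chainHeight_le_of_forall_finset_card_le H.edgeSet.toFinite (hn₀ n hn)⟩) hthr

end RTG
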